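/- arXiv:1802.00969 — 3 statements merged into one kernel-verified Lean document; each statement's English description precedes it below -/
import Mathlib

section
/- Let V and W be H-modules, each finite-dimensional over F and indecomposable, and assume V and W are not isomorphic as H-modules. Then for every s ∈ ℕ and all families of H-linear maps f_1, …, f_s : V → W and g_1, …, g_s : W → V, the endomorphism Σ_{l=1}^{s} g_l ∘ f_l lies in the Jacobson radical of the endomorphism ring End_H(V); in particular it is not a unit of End_H(V). -/
/-!
By Fitting's lemma the endomorphism ring of an indecomposable module `V` of finite length is local,
so its Jacobson radical is the set of its nonunits, and a sum of nonunits is a nonunit. It remains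
to see that a single composite `g ∘ f : V → W → V` is not a unit: if it were, `range f` and `ker g`
would be complementary in `W`, so `f` would be an isomorphism by indecomposability of `W`.
-/

/-- An `H`-module `M` is indecomposable if it is nonzero and whenever `p` and `q` are
complementary submodules, one of them is trivial. -/
def IsIndecomposableModule (H : Type*) [Ring H] (M : Type*) [AddCommGroup M]
    [Module H M] : Prop :=
  (∃ x : M, x ≠ 0) ∧
    ∀ p q : Submodule H M, p ⊓ q = ⊥ → p ⊔ q = ⊤ → p = ⊥ ∨ q = ⊥

section LocalRing

variable {R : Type*} [Ring R] [IsLocalRing R]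

variable (R) in
theorem isDedekindFiniteMonoid_of_isLocalRing : IsDedekindFiniteMonoid R where
  mul_eq_one_symm {a b} hab := by
    have hidem : IsIdempotentElem (b * a) := by
      rw [IsIdempotentElem, mul_assoc, ← mul_assoc a, hab, one_mul]
    rcases IsLocalRing.isUnit_or_isUnit_of_add_one (add_sub_cancel (b * a) 1) with hu | hu
    · exact (IsIdempotentElem.iff_eq_one_of_isUnit hu).mp hidem
    · have hb : b = 0 := by
        rw [← hu.mul_right_eq_zero, sub_mul, mul_assoc, hab, one_mul, mul_one, sub_self]
      simp [hb] at hab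

theorem mem_jacobson_bot_iff_mem_nonunits {x : R} :
    x ∈ (⊥ : Ideal R).jacobson ↔ x ∈ nonunits R := by
  have := isDedekindFiniteMonoid_of_isLocalRing R
  refine ⟨fun hx ↦ coe_subset_nonunits (mt Ideal.jacobson_eq_top_iff.mp bot_ne_top) hx,
    fun hx ↦ Ideal.mem_jacobson_iff.mpr fun y ↦ ?_⟩
  have hneg : ¬ IsUnit (-(y * x)) := fun hu ↦
    hx (isUnit_of_mul_isUnit_right ((IsUnit.neg_iff _).mp hu))
  have hunit : IsUnit (y * x + 1) :=
    (IsLocalRing.isUnit_or_isUnit_of_add_one (add_neg_cancel_comm (y * x) 1)).resolve_right hneg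
  obtain ⟨z, hz⟩ := hunit.exists_left_inv
  exact ⟨z, by rw [Ideal.mem_bot, sub_eq_zero, ← hz, mul_add, mul_one, mul_assoc]⟩

end LocalRing

theorem isCompl_range_ker_of_bijective_comp {R U V W : Type*} [Semiring R]
    [AddCommMonoid U] [Module R U] [AddCommGroup V] [Module R V] [AddCommGroup W] [Module R W]
    {f : U →ₗ[R] V} {g : V →ₗ[R] W} (hgf : Function.Bijective (g ∘ₗ f)) :
    IsCompl (LinearMap.range f) (LinearMap.ker g) := by
  constructor
  · rw [Submodule.disjoint_def]
    rintro _ ⟨u, rfl⟩ hu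
    have hu_zero : u = 0 := (map_eq_zero_iff _ hgf.injective).mp hu
    rw [hu_zero, map_zero]
  · rw [Submodule.codisjoint_iff_exists_add_eq]
    intro v
    obtain ⟨u, hu⟩ := hgf.surjective (g v)
    have hker : v - f u ∈ LinearMap.ker g := by
      rw [LinearMap.mem_ker, map_sub, sub_eq_zero, ← hu, LinearMap.comp_apply]
    exact ⟨f u, v - f u, ⟨u, rfl⟩, hker, add_sub_cancel _ _⟩

namespace IsIndecomposableModule

variable {H M N : Type*} [Ring H] [AddCommGroup M] [Module H M] [AddCommGroup N] [Module H N]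

theorem isUnit_or_isNilpotent [IsArtinian H M] [IsNoetherian H M]
    (hM : IsIndecomposableModule H M) (φ : Module.End H M) : IsUnit φ ∨ IsNilpotent φ := by
  obtain ⟨n, hcompl, hn⟩ :=
    (φ.eventually_isCompl_ker_pow_range_pow.and (Filter.eventually_ne_atTop 0)).exists
  rcases hM.2 _ _ hcompl.inf_eq_bot hcompl.sup_eq_top with hker | hrange
  · have hrange : LinearMap.range (φ ^ n) = ⊤ := by simpa [hker] using hcompl.sup_eq_top
    have hpow : IsUnit (φ ^ n) := (Module.End.isUnit_iff _).mpr
      ⟨LinearMap.ker_eq_bot.mp hker, LinearMap.range_eq_top.mp hrange⟩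
    exact .inl ((isUnit_pow_iff hn).mp hpow)
  · exact .inr ⟨n, LinearMap.range_eq_bot.mp hrange⟩

theorem isLocalRing_end [IsArtinian H M] [IsNoetherian H M]
    (hM : IsIndecomposableModule H M) : IsLocalRing (Module.End H M) := by
  have : Nontrivial M := (nontrivial_iff_exists_ne 0).mpr hM.1
  refine ⟨fun {φ ψ} hsum ↦ (hM.isUnit_or_isNilpotent φ).imp_right fun hφ ↦ ?_⟩
  rw [← sub_eq_of_eq_add' hsum.symm]
  exact hφ.isUnit_one_sub

theorem nonempty_linearEquiv_of_bijective_comp [Nontrivial M] (hN : IsIndecomposableModule H N)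
    {f : M →ₗ[H] N} {g : N →ₗ[H] M} (hgf : Function.Bijective (g ∘ₗ f)) :
    Nonempty (M ≃ₗ[H] N) := by
  have hf : Function.Injective f := .of_comp hgf.injective
  have hcompl := isCompl_range_ker_of_bijective_comp hgf
  rcases hN.2 _ _ hcompl.inf_eq_bot hcompl.sup_eq_top with hrange | hker
  · rw [LinearMap.range_eq_bot] at hrange
    exact absurd hrange (LinearMap.ne_zero_of_injective hf)
  · have hrange : LinearMap.range f = ⊤ := by simpa [hker] using hcompl.sup_eq_top
    exact ⟨.ofBijective f ⟨hf, LinearMap.range_eq_top.mp hrange⟩⟩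

end IsIndecomposableModule

theorem stmt1_general {H V W ι : Type*} [Ring H] [AddCommGroup V] [Module H V] [AddCommGroup W]
    [Module H W] [IsLocalRing (Module.End H V)] (hW : IsIndecomposableModule H W)
    (hniso : ¬ Nonempty (V ≃ₗ[H] W)) (s : Finset ι) (f : ι → (V →ₗ[H] W)) (g : ι → (W →ₗ[H] V)) :
    ((∑ l ∈ s, (g l).comp (f l) : Module.End H V) ∈ (⊥ : Ideal (Module.End H V)).jacobson) ∧
      ¬ IsUnit (∑ l ∈ s, (g l).comp (f l) : Module.End H V) := by
  have : Nontrivial V := by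
    rw [← not_subsingleton_iff_nontrivial]
    exact fun _ ↦ not_subsingleton (Module.End H V) inferInstance
  have hsum : (∑ l ∈ s, (g l).comp (f l) : Module.End H V) ∈ nonunits (Module.End H V) := by
    intro hunit
    obtain ⟨l, -, hl⟩ := IsLocalRing.exists_of_isUnit_sum hunit
    exact hniso (hW.nonempty_linearEquiv_of_bijective_comp ((Module.End.isUnit_iff _).mp hl))
  exact ⟨mem_jacobson_bot_iff_mem_nonunits.mpr hsum, hsum⟩

theorem stmt1 (F : Type*) [Field F] (H : Type*) [Ring H] [Algebra F H]
    (V W : Type*)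
    [AddCommGroup V] [Module H V] [Module F V] [IsScalarTower F H V] [FiniteDimensional F V]
    [AddCommGroup W] [Module H W] [Module F W] [IsScalarTower F H W] [FiniteDimensional F W]
    (hV : IsIndecomposableModule H V) (hW : IsIndecomposableModule H W)
    (hniso : ¬ Nonempty (V ≃ₗ[H] W))
    (s : ℕ) (f : Fin s → (V →ₗ[H] W)) (g : Fin s → (W →ₗ[H] V)) :
    ((∑ l, (g l).comp (f l) : Module.End H V) ∈ (⊥ : Ideal (Module.End H V)).jacobson) ∧
      ¬ IsUnit (∑ l, (g l).comp (f l) : Module.End H V) := by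
  have : IsArtinian H V := isArtinian_of_tower F inferInstance
  have : IsNoetherian H V := isNoetherian_of_tower F inferInstance
  have := hV.isLocalRing_end
  exact stmt1_general hW hniso Finset.univ f g
end

section
/- Let A be a finite-dimensional F-algebra and e_1, …, e_n ∈ A idempotents with e_i·e_j = 0 for i ≠ j, e_1 + ⋯ + e_n = 1, each e_i a primitive idempotent, and such that for all i ≠ j and all x, y ∈ A, the element e_i·x·e_j·y·e_i lies in the Jacobson radical of A. Let m, s : Fin n → ℕ, set I(m) := Σ i : Fin n, Fin (m i) and I(s) := Σ i : Fin n, Fin (s i), and suppose X : Matrix I(m) I(s) A and Y : Matrix I(s) I(m) A satisfy: X a b = e_{a.1}·(X a b)·e_{b.1} and Y b a = e_{b.1}·(Y b a)·e_{a.1} for all indices, X·Y = E_m and Y·X = E_s, where E_m is the I(m) × I(m) matrix with (E_m) a a = e_{a.1} and zero off the diagonal (and E_s likewise). Then m = s. -/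
/-- An idempotent `e` of a ring is primitive if it is nonzero and cannot be written as a sum of
two nonzero orthogonal idempotents. -/
def IsPrimitiveIdempotent {R : Type*} [Ring R] (e : R) : Prop :=
  IsIdempotentElem e ∧ e ≠ 0 ∧
    ∀ f g : R, IsIdempotentElem f → IsIdempotentElem g → f * g = 0 → g * f = 0 →
      e = f + g → f = 0 ∨ g = 0

/-!
Apply a ring homomorphism `φ : A →+* B` under which every `e i * x * e j * y * e i` with `i ≠ j`
vanishes but no `e i` does. Reduction modulo the Jacobson radical is one, because the radical
contains no nonzero idempotent. The off-diagonal blocks no longer contribute to the diagonal blocks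
of `X * Y`, so the images of the blocks `X i i` and `Y i i` multiply to `f` times an identity
matrix, where `f = φ (e i)`. Right multiplication by the image of `X i i` therefore embeds
`(B f) ^ m i` into `(B f) ^ s i`. Since `B f` is a nonzero Noetherian left module, this forces
`m i ≤ s i`; the other inequality follows by exchanging `X` and `Y`.
-/

open Function

theorem card_le_card_of_injective_pi {R M α β : Type*} [Ring R] [AddCommGroup M] [Module R M]
    [IsNoetherian R M] [Nontrivial M] [Fintype α] [Fintype β]
    (g : (α → M) →ₗ[R] (β → M)) (hg : Injective g) : Fintype.card α ≤ Fintype.card β := by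
  by_contra! hlt
  obtain ⟨ι⟩ : Nonempty (Option β ↪ α) :=
    Embedding.nonempty_of_card_le (by rwa [Fintype.card_option])
  let pullback : (Option β → M) →ₗ[R] (α → M) := LinearMap.funLeft R M (invFun ι)
  have pullback_injective : Injective pullback :=
    LinearMap.funLeft_injective_of_surjective R M _ (invFun_surjective ι.injective)
  let split : (Option β → M) ≃ₗ[R] M × (β → M) := LinearEquiv.piOptionEquivProd R
  exact not_subsingleton M <| IsNoetherian.subsingleton_of_injective
    (f := g ∘ₗ pullback ∘ₗ split.symm.toLinearMap)
    (hg.comp (pullback_injective.comp split.symm.injective))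

theorem card_le_card_of_mul_eq_diagonal_idempotent {B α β : Type*} [Ring B] [IsNoetherianRing B]
    [Fintype α] [Fintype β] [DecidableEq α] {f : B} (hf : IsIdempotentElem f) (hf₀ : f ≠ 0)
    (X : Matrix α β B) (Y : Matrix β α B) (hX : ∀ a b, X a b * f = X a b)
    (hXY : X * Y = Matrix.diagonal fun _ => f) : Fintype.card α ≤ Fintype.card β := by
  let P : Ideal B := Ideal.span {f}
  have mul_f (w : P) : (w : B) * f = w := by
    obtain ⟨c, hc⟩ := Ideal.mem_span_singleton'.1 w.2
    rw [← hc, mul_assoc, hf.eq]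
  have : Nontrivial P := Submodule.nontrivial_iff_ne_bot.2 (by simpa [P] using hf₀)
  let entry (a : α) (b : β) : P := ⟨X a b, Ideal.mem_span_singleton'.2 ⟨X a b, hX a b⟩⟩
  let mulX : (α → P) →ₗ[B] (β → P) :=
    LinearMap.pi fun b => Fintype.linearCombination B (entry · b) ∘ₗ P.subtype.compLeft α
  have coe_mulX (w : α → P) : (fun b => (mulX w b : B)) = Matrix.vecMul (fun a => (w a : B)) X := by
    ext b
    simp [mulX, entry, Fintype.linearCombination_apply, Matrix.vecMul, dotProduct]
  have mulX_mul_Y (w : α → P) :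
      Matrix.vecMul (fun b => (mulX w b : B)) Y = fun a => (w a : B) := by
    ext a
    rw [coe_mulX, Matrix.vecMul_vecMul, hXY, Matrix.vecMul_diagonal, mul_f]
  have mulX_injective : Injective mulX := fun w w' h => by
    ext a
    rw [← congrFun (mulX_mul_Y w) a, h, mulX_mul_Y w']
  exact card_le_card_of_injective_pi mulX mulX_injective

theorem map_diagonal_block_mul {A B ι : Type*} [Semiring A] [Semiring B] [Fintype ι]
    {α β γ : ι → Type*} [∀ i, Fintype (β i)] (φ : A →+* B)
    (X : Matrix (Σ i, α i) (Σ i, β i) A) (Y : Matrix (Σ i, β i) (Σ i, γ i) A) (i : ι)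
    (hoff : ∀ j, i ≠ j → ∀ a b c, φ (X ⟨i, a⟩ ⟨j, b⟩ * Y ⟨j, b⟩ ⟨i, c⟩) = 0) :
    ((X * Y).submatrix (Sigma.mk i) (Sigma.mk i)).map φ =
      (X.submatrix (Sigma.mk i) (Sigma.mk i)).map φ *
        (Y.submatrix (Sigma.mk i) (Sigma.mk i)).map φ := by
  classical
  ext a c
  have hblock : ∀ j, j ≠ i → ∑ b, φ (X ⟨i, a⟩ ⟨j, b⟩ * Y ⟨j, b⟩ ⟨i, c⟩) = 0 :=
    fun j hj => Finset.sum_eq_zero fun b _ => hoff j hj.symm a b c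
  simp only [Matrix.map_apply, Matrix.submatrix_apply, Matrix.mul_apply, Fintype.sum_sigma,
    map_sum]
  rw [Fintype.sum_eq_single i hblock]
  simp only [map_mul]

theorem card_fiber_le_of_mul_eq_diagonal_idempotent {A B ι : Type*} [Semiring A] [Ring B]
    [IsNoetherianRing B] [Fintype ι] [DecidableEq ι] {α β : ι → Type*} [∀ i, Fintype (α i)]
    [∀ i, Fintype (β i)] [∀ i, DecidableEq (α i)] (φ : A →+* B) {e : ι → A}
    (hidem : ∀ i, IsIdempotentElem (e i))
    (hker : ∀ i j, i ≠ j → ∀ x y, φ (e i * x * e j * y * e i) = 0)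
    (X : Matrix (Σ i, α i) (Σ i, β i) A) (Y : Matrix (Σ i, β i) (Σ i, α i) A)
    (hX : ∀ a b, X a b = e a.1 * X a b * e b.1) (hY : ∀ b a, Y b a = e b.1 * Y b a * e a.1)
    (hXY : X * Y = Matrix.diagonal fun a => e a.1) (i : ι) (hi : φ (e i) ≠ 0) :
    Fintype.card (α i) ≤ Fintype.card (β i) := by
  have hoff (j : ι) (hij : i ≠ j) (a : α i) (b : β j) (c : α i) :
      φ (X ⟨i, a⟩ ⟨j, b⟩ * Y ⟨j, b⟩ ⟨i, c⟩) = 0 := by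
    have hXe : X ⟨i, a⟩ ⟨j, b⟩ = e i * X ⟨i, a⟩ ⟨j, b⟩ * e j := hX _ _
    have hYe : Y ⟨j, b⟩ ⟨i, c⟩ * e i = Y ⟨j, b⟩ ⟨i, c⟩ := by
      rw [hY, mul_assoc, (hidem i).eq]
    rw [← hYe, hXe, ← mul_assoc, hker i j hij]
  refine card_le_card_of_mul_eq_diagonal_idempotent ((hidem i).map φ) hi
    ((X.submatrix (Sigma.mk i) (Sigma.mk i)).map φ)
    ((Y.submatrix (Sigma.mk i) (Sigma.mk i)).map φ) (fun a b => ?_) ?_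
  · rw [Matrix.map_apply, Matrix.submatrix_apply, ← map_mul, hX, mul_assoc, (hidem i).eq]
  · rw [← map_diagonal_block_mul φ X Y i hoff, hXY,
      Matrix.submatrix_diagonal _ _ sigma_mk_injective, Matrix.diagonal_map (map_zero φ)]
    rfl

theorem mem_of_isIdempotentElem_of_mem_jacobson {R : Type*} [Ring R] {I : Ideal R}
    [I.IsTwoSided] {e : R} (he : IsIdempotentElem e) (hmem : e ∈ I.jacobson) : e ∈ I := by
  obtain ⟨z, hz⟩ := Ideal.exists_mul_add_sub_mem_of_mem_jacobson (-e) (neg_mem hmem)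
  have hze : (z * (-e + 1) - 1) * e = -e := by
    rw [sub_mul, mul_assoc, add_mul, neg_mul, he.eq, one_mul, neg_add_cancel, mul_zero, zero_sub]
  exact neg_mem_iff.1 (hze ▸ I.mul_mem_right e hz)

theorem stmt5_general {A B ι : Type*} [Semiring A] [Ring B] [IsNoetherianRing B] [Fintype ι]
    [DecidableEq ι] (φ : A →+* B) {e : ι → A} (hidem : ∀ i, IsIdempotentElem (e i))
    (hne : ∀ i, φ (e i) ≠ 0)
    (hker : ∀ i j, i ≠ j → ∀ x y, φ (e i * x * e j * y * e i) = 0)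
    {m s : ι → ℕ}
    (X : Matrix (Σ i, Fin (m i)) (Σ i, Fin (s i)) A)
    (Y : Matrix (Σ i, Fin (s i)) (Σ i, Fin (m i)) A)
    (hX : ∀ a b, X a b = e a.1 * X a b * e b.1)
    (hY : ∀ b a, Y b a = e b.1 * Y b a * e a.1)
    (hXY : X * Y = Matrix.diagonal fun a => e a.1)
    (hYX : Y * X = Matrix.diagonal fun b => e b.1) :
    m = s := by
  funext i
  have hms := card_fiber_le_of_mul_eq_diagonal_idempotent φ hidem hker X Y hX hY hXY i (hne i)
  have hsm := card_fiber_le_of_mul_eq_diagonal_idempotent φ hidem hker Y X hY hX hYX i (hne i)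
  simpa only [Fintype.card_fin] using le_antisymm hms hsm

theorem stmt5 (F : Type*) [Field F] (A : Type*) [Ring A] [Algebra F A]
    [FiniteDimensional F A]
    (n : ℕ) (e : Fin n → A)
    (hidem : ∀ i, IsIdempotentElem (e i))
    (horth : ∀ i j : Fin n, i ≠ j → e i * e j = 0)
    (hsum : ∑ i, e i = 1)
    (hprim : ∀ i, IsPrimitiveIdempotent (e i))
    (hrad : ∀ i j : Fin n, i ≠ j → ∀ x y : A,
      e i * x * e j * y * e i ∈ (⊥ : Ideal A).jacobson)
    (m s : Fin n → ℕ)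
    (X : Matrix (Σ i : Fin n, Fin (m i)) (Σ i : Fin n, Fin (s i)) A)
    (Y : Matrix (Σ i : Fin n, Fin (s i)) (Σ i : Fin n, Fin (m i)) A)
    (hX : ∀ a b, X a b = e a.1 * X a b * e b.1)
    (hY : ∀ b a, Y b a = e b.1 * Y b a * e a.1)
    (hXY : X * Y = Matrix.diagonal fun a => e a.1)
    (hYX : Y * X = Matrix.diagonal fun b => e b.1) :
    m = s := by
  have : IsNoetherianRing (A ⧸ (⊥ : Ideal A).jacobson) := .of_finite F _
  exact stmt5_general (Ideal.Quotient.mk (⊥ : Ideal A).jacobson) hidem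
    (fun i hi => (hprim i).2.1 (mem_of_isIdempotentElem_of_mem_jacobson (hidem i)
      (Ideal.Quotient.eq_zero_iff_mem.1 hi)))
    (fun i j hij x y => Ideal.Quotient.eq_zero_iff_mem.2 (hrad i j hij x y)) X Y hX hY hXY hYX
end

section
/- Let B be a (possibly noncommutative) local ring, i.e., B is nontrivial and for all a, b ∈ B with a + b = 1, a is a unit or b is a unit. Let m, s ∈ ℕ and suppose there exist matrices X : Matrix (Fin m) (Fin s) B and Y : Matrix (Fin s) (Fin m) B with X·Y = 1 (the m × m identity matrix over B). Then m ≤ s. -/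
/-!
The nonunits of a local ring `B` form a two-sided ideal, and the quotient by it is a division ring.
Over a division ring `X * Y = 1` forces `m ≤ s` by linear algebra, and ring homomorphisms carry the
relation `X * Y = 1` from `B` to that quotient.
-/

theorem rankCondition_of_ringHom {R S : Type*} [Semiring R] [Semiring S] [RankCondition S]
    (f : R →+* S) : RankCondition R :=
  rankCondition_iff_matrix.mpr fun n m Y X hXY ↦
    rankCondition_iff_matrix.mp inferInstance n m (Y.map f) (X.map f) <| by
      rw [← Matrix.map_mul, hXY, Matrix.map_one f f.map_zero f.map_one]

section LocalRing

variable {B : Type*} [Ring B] [IsLocalRing B]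

theorem eq_zero_or_eq_one_of_isIdempotentElem {e : B} (he : IsIdempotentElem e) :
    e = 0 ∨ e = 1 := by
  rcases IsLocalRing.isUnit_or_isUnit_of_add_one (add_sub_cancel e 1) with hu | hu
  · exact .inr (sub_eq_zero.mp (hu.mul_right_eq_zero.mp he.mul_one_sub_self)).symm
  · exact .inl (hu.mul_left_eq_zero.mp he.mul_one_sub_self)

instance isDedekindFiniteMonoid_of_isLocalRing_s6 : IsDedekindFiniteMonoid B where
  mul_eq_one_symm {a b} hab := by
    have hidem : IsIdempotentElem (b * a) := by
      rw [IsIdempotentElem, mul_assoc, ← mul_assoc a, hab, one_mul]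
    refine (eq_zero_or_eq_one_of_isIdempotentElem hidem).resolve_left fun hba ↦ ?_
    have ha : a = 0 := by rw [← one_mul a, ← hab, mul_assoc, hba, mul_zero]
    exact one_ne_zero (by rw [← hab, ha, zero_mul])

variable (B)

/-- The ideal of nonunits of a local ring, its unique maximal left ideal; Mathlib's
`IsLocalRing.maximalIdeal` is restricted to commutative rings. -/
def nonunitsIdeal : Ideal B where
  __ := IsLocalRing.nonunitsAddSubmonoid B
  smul_mem' _ _ hb hab := hb (isUnit_of_mul_isUnit_right hab)

instance nonunitsIdeal.isTwoSided : (nonunitsIdeal B).IsTwoSided where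
  mul_mem_of_left _ ha hab := ha (isUnit_of_mul_isUnit_left hab)

instance nonunitsIdeal.nontrivial_quotient : Nontrivial (B ⧸ nonunitsIdeal B) :=
  Ideal.Quotient.nontrivial_iff.mpr <| (Ideal.ne_top_iff_one _).mpr fun h ↦ h isUnit_one

noncomputable instance nonunitsIdeal.divisionRingQuotient : DivisionRing (B ⧸ nonunitsIdeal B) :=
  .ofIsUnitOrEqZero <| Ideal.Quotient.mk_surjective.forall.mpr fun b ↦
    (em (IsUnit b)).imp (·.map (Ideal.Quotient.mk _)) Ideal.Quotient.eq_zero_iff_mem.mpr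

instance rankCondition_of_isLocalRing : RankCondition B :=
  rankCondition_of_ringHom (Ideal.Quotient.mk (nonunitsIdeal B))

end LocalRing

theorem stmt6 (B : Type*) [Ring B] [Nontrivial B]
    (hloc : ∀ a b : B, a + b = 1 → IsUnit a ∨ IsUnit b)
    (m s : ℕ) (X : Matrix (Fin m) (Fin s) B) (Y : Matrix (Fin s) (Fin m) B)
    (hXY : X * Y = 1) :
    m ≤ s := by
  have : IsLocalRing B := ⟨fun {a b} ↦ hloc a b⟩
  exact rankCondition_iff_matrix.mp inferInstance s m Y X hXY
end
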